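/- Fix integers x_1 > x_2 > … > x_ℓ > 0 and positive integers r_1, …, r_ℓ. Let m_1 < … < m_e be the indices m ∈ {1,…,ℓ} for which r_1 + … + r_m is even, and let Z = {1} ∪ {2m_i, 2m_i+1 : 1 ≤ i ≤ e}. Then the following two sets of subgroups of the quotient group A/K coincide: the set {p(A_𝓛) : 𝓛 an even NCP of B_λ} and the set {H_σ : σ a Temperley–Lieb pattern of Z}. -/

import Mathlib

/-- `P` is a partition of the finite set `B ⊆ ℕ` into nonempty blocks. -/
def IsPartitionOf (B : Finset ℕ) (P : Finset (Finset ℕ)) : Prop :=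
  (∀ L ∈ P, L.Nonempty) ∧ (∀ L ∈ P, L ⊆ B) ∧ ∀ b ∈ B, ∃! L, L ∈ P ∧ b ∈ L

/-- The noncrossing condition on the blocks. -/
def PairwiseNoncrossing (P : Finset (Finset ℕ)) : Prop :=
  ∀ L ∈ P, ∀ L' ∈ P, L ≠ L' →
    ∀ a ∈ L, ∀ b ∈ L, ∀ c ∈ L', ∀ d ∈ L', a ≤ b → c ≤ d →
      Finset.Icc a b ∩ Finset.Icc c d = ∅ ∨
      Finset.Icc a b ⊆ Finset.Icc c d ∨ Finset.Icc c d ⊆ Finset.Icc a b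

/-- A noncrossing partition (NCP) of the finite set `B ⊆ ℕ`. -/
def IsNCP (B : Finset ℕ) (P : Finset (Finset ℕ)) : Prop :=
  IsPartitionOf B P ∧ PairwiseNoncrossing P

/-- `B_λ = {0, 2x₁, …, 2x_ℓ}` (indices `1, …, ℓ`). -/
def Blam (ℓ : ℕ) (x : ℕ → ℕ) : Finset ℕ :=
  insert 0 ((Finset.Icc 1 ℓ).image (fun i => 2 * x i))

/-- An even NCP of `B_λ`: an NCP such that every block `L` not containing `0`
has `r(L) = Σ_{j : 2x_j ∈ L} r_j` even. -/
def IsEvenNCP (ℓ : ℕ) (x r : ℕ → ℕ) (P : Finset (Finset ℕ)) : Prop :=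
  IsNCP (Blam ℓ x) P ∧
    ∀ L ∈ P, 0 ∉ L →
      Even (∑ j ∈ (Finset.Icc 1 ℓ).filter (fun j => 2 * x j ∈ L), r j)

/-- The standard generator `t_i` (for `1 ≤ i ≤ ℓ`) of `A = (ℤ/2)^ℓ`, written
additively; `t i = 0` for `i ∉ [1, ℓ]` (in particular `t (ℓ+1) = 1` is the identity). -/
def tgen (ℓ : ℕ) (i : ℕ) : Fin ℓ → ZMod 2 :=
  fun j => if (j : ℕ) + 1 = i then 1 else 0

/-- The subgroup `A_𝓛 ⊆ A` attached to an NCP `𝓛` of `B_λ` with `0 ∈ L₀`: generated by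
the `t_i + t_j` with `2x_i, 2x_j` in a common block not containing `0`, together with
the `t_i` with `2x_i` in the block containing `0`. -/
def ncpSubgroup (ℓ : ℕ) (x : ℕ → ℕ) (P : Finset (Finset ℕ)) :
    AddSubgroup (Fin ℓ → ZMod 2) :=
  AddSubgroup.closure
    ({a | ∃ L ∈ P, 0 ∉ L ∧ ∃ i ∈ Finset.Icc 1 ℓ, ∃ j ∈ Finset.Icc 1 ℓ,
        2 * x i ∈ L ∧ 2 * x j ∈ L ∧ a = tgen ℓ i + tgen ℓ j} ∪
     {a | ∃ L ∈ P, 0 ∈ L ∧ ∃ i ∈ Finset.Icc 1 ℓ, 2 * x i ∈ L ∧ a = tgen ℓ i})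

/-- The subgroup `K ⊆ A` generated by the `t_m + t_{m+1}` over the `1 ≤ m ≤ ℓ` with
`r₁ + … + r_m` odd (with `t_{ℓ+1}` the identity). -/
def Ksub (ℓ : ℕ) (r : ℕ → ℕ) : AddSubgroup (Fin ℓ → ZMod 2) :=
  AddSubgroup.closure
    {a | ∃ m ∈ Finset.Icc 1 ℓ, Odd (∑ j ∈ Finset.Icc 1 m, r j) ∧
        a = tgen ℓ m + tgen ℓ (m + 1)}

/-- A Temperley–Lieb pattern of `Z`. -/
def IsTLPattern (Z : Finset ℕ) (σ : Finset (Finset ℕ)) : Prop :=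
  IsPartitionOf Z σ ∧ PairwiseNoncrossing σ ∧
  ∃ M0 ∈ σ, ∃ d, Odd d ∧ M0 = ({d} : Finset ℕ) ∧
    ∀ M ∈ σ, M ≠ M0 → ∃ a b, a < b ∧ M = ({a, b} : Finset ℕ) ∧ (b < d ∨ d < a)

/-- For `b ∈ E`, the generator `t_{m}` for `m` the successor of `b` in `E`
(the identity `0` if `b` is the largest element of `E`). -/
def nextT (ℓ : ℕ) (E : Finset ℕ) (b : ℕ) : Fin ℓ → ZMod 2 :=
  if h : (E.filter (fun m => b < m)).Nonempty then
    tgen ℓ ((E.filter (fun m => b < m)).min' h)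
  else 0

/-- The generating set in `A` attached to a TL pattern `σ` of
`Z = {1} ∪ {2m_i, 2m_i + 1 : m_i ∈ E}`: for each block `{2m_{i₁}, 2m_{i₂-1}+1}` of σ
(`i₁ < i₂ ≤ e`) the element `t_{m_{i₁}} + t_{m_{i₂}}`, and for the block
`{2m_j, 2m_e+1}` (if present) the element `t_{m_j}`. -/
def tlGens (ℓ : ℕ) (E : Finset ℕ) (σ : Finset (Finset ℕ)) : Set (Fin ℓ → ZMod 2) :=
  {a | ∃ c ∈ E, ∃ d ∈ E, c ≤ d ∧ ({2 * c, 2 * d + 1} : Finset ℕ) ∈ σ ∧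
      a = tgen ℓ c + nextT ℓ E d}

/-!
Since `A_𝓛` and `H_σ` are generated by sums `t_i + t_j`, whether they are contained, after adding
`K`, in a subgroup `W` of `A` depends only on which of the `t_i` agree modulo `W`, an equivalence
relation on indices. So `A_𝓛 + K` is encoded by a relation `R` on indices, the join of being in the
same block of `𝓛` with the relation of `K`, whose classes are intervals; the index `ℓ + 1` plays
the role of `0 ∈ B_λ`. Joining with a relation with convex classes keeps `R` noncrossing.

Conversely, a noncrossing `R` containing the relation of `K` comes from an `𝓛` which is
automatically even: membership in a block changes only after an index where the partial sum of `r`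
is even, so summation by parts applies. Finally, such relations correspond to Temperley–Lieb
patterns as noncrossing partitions correspond to noncrossing pairings: walk around each class,
joining each index to the next one in cyclic order.
-/

section Noncrossing

/-- An equivalence relation on a linear order is noncrossing if no two of its classes interleave:
the counterpart, for points on a line, of `PairwiseNoncrossing`. -/
def IsNoncrossing {ι : Type*} [LinearOrder ι] (R : Setoid ι) : Prop :=
  ∀ ⦃i j k l : ι⦄, i < j → j < k → k < l → R i k → R j l → R i j

/-- An equivalence relation on a linear order all of whose classes are order-convex; the relations
defining `Ksub` are of this kind. -/
def HasConvexClasses {ι : Type*} [LinearOrder ι] (K : Setoid ι) : Prop :=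
  ∀ ⦃i j k : ι⦄, i ≤ j → j ≤ k → K i k → K i j

lemma mem_of_sup_rel {ι : Type*} {R K : Setoid ι} {s : Set ι} {a b : ι}
    (hR : ∀ a ∈ s, ∀ b, R a b → b ∈ s) (hK : ∀ a ∈ s, ∀ b, K a b → b ∈ s)
    (hab : (R ⊔ K) a b) (ha : a ∈ s) : b ∈ s := by
  have le_ker {S : Setoid ι} (hS : ∀ a ∈ s, ∀ b, S a b → b ∈ s) : S ≤ Setoid.ker (· ∈ s) :=
    fun a b h => propext ⟨fun ha => hS a ha b h, fun hb => hS b hb a (S.symm h)⟩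
  have hker : (a ∈ s) = (b ∈ s) := sup_le (le_ker hR) (le_ker hK) hab
  exact hker ▸ ha

variable {ι : Type*} [LinearOrder ι] {R K : Setoid ι} {i k p q u v : ι}

lemma HasConvexClasses.exists_rel_jump (hK : HasConvexClasses K) (hik : (R ⊔ K) i k)
    (hip : i < p) (hpk : p < k) (hp : ¬ (R ⊔ K) i p) :
    ∃ u v, u < p ∧ p < v ∧ R u v ∧ (R ⊔ K) i u := by
  by_contra! hno
  have hR_le : R ≤ R ⊔ K := le_sup_left
  have hK_le : K ≤ R ⊔ K := le_sup_right
  have below : ∀ a, (R ⊔ K) i a → ¬ p < a → a < p := fun a ha hpa =>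
    (not_lt.1 hpa).lt_of_ne (by rintro rfl; exact hp ha)
  have hk : k ∈ {a | (R ⊔ K) i a ∧ a < p} := by
    refine mem_of_sup_rel ?_ ?_ hik ⟨(R ⊔ K).refl i, hip⟩
    · rintro a ⟨hia, hap⟩ b hab
      have hib := (R ⊔ K).trans hia (hR_le hab)
      exact ⟨hib, below b hib fun hpb => hno a b hap hpb hab hia⟩
    · rintro a ⟨hia, hap⟩ b hab
      have hib := (R ⊔ K).trans hia (hK_le hab)
      exact ⟨hib, below b hib fun hpb =>
        hp ((R ⊔ K).trans hia (hK_le (hK hap.le hpb.le hab)))⟩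
  exact hk.2.not_gt hpk

lemma IsNoncrossing.mem_Ioo_of_sup_rel (hR : IsNoncrossing R) (hK : HasConvexClasses K)
    (huv : R u v) (hup : p ∈ Set.Ioo u v) (hp : ¬ (R ⊔ K) u p) (hpq : (R ⊔ K) p q) :
    q ∈ Set.Ioo u v := by
  have hR_le : R ≤ R ⊔ K := le_sup_left
  have hK_le : K ≤ R ⊔ K := le_sup_right
  have huv' := hR_le huv
  have not_u : ∀ a, (R ⊔ K) p a → ¬ (R ⊔ K) u a := fun a hpa hua =>
    hp ((R ⊔ K).trans hua ((R ⊔ K).symm hpa))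
  have ne_u : ∀ a, (R ⊔ K) p a → a ≠ u := by
    rintro a hpa rfl; exact not_u a hpa ((R ⊔ K).refl a)
  have ne_v : ∀ a, (R ⊔ K) p a → a ≠ v := by
    rintro a hpa rfl; exact not_u a hpa huv'
  suffices hq : q ∈ {a | (R ⊔ K) p a ∧ a ∈ Set.Ioo u v} from hq.2
  refine mem_of_sup_rel ?_ ?_ hpq ⟨(R ⊔ K).refl p, hup⟩
  · rintro a ⟨hpa, hua, hav⟩ b hab
    have hpb := (R ⊔ K).trans hpa (hR_le hab)
    refine ⟨hpb, lt_of_not_ge fun hbu => ?_, lt_of_not_ge fun hvb => ?_⟩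
    · have hbu' := hR (hbu.lt_of_ne (ne_u b hpb)) hua hav (R.symm hab) huv
      exact not_u b hpb (hR_le (R.symm hbu'))
    · exact not_u a hpa (hR_le (hR hua hav (hvb.lt_of_ne (ne_v b hpb).symm) huv hab))
  · rintro a ⟨hpa, hua, hav⟩ b hab
    have hpb := (R ⊔ K).trans hpa (hK_le hab)
    refine ⟨hpb, lt_of_not_ge fun hbu => ?_, lt_of_not_ge fun hvb => ?_⟩
    · exact not_u b hpb ((R ⊔ K).symm (hK_le (hK hbu hua.le (K.symm hab))))
    · exact not_u a hpa
        ((R ⊔ K).trans huv' ((R ⊔ K).symm (hK_le (hK hav.le hvb hab))))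

lemma IsNoncrossing.sup (hR : IsNoncrossing R) (hK : HasConvexClasses K) :
    IsNoncrossing (R ⊔ K) := by
  intro i j k l hij hjk hkl hik hjl
  by_contra hn
  obtain ⟨u, v, huj, hjv, huv, hiu⟩ := hK.exists_rel_jump hik hij hjk hn
  have hkj : ¬ (R ⊔ K) j k := fun h => hn ((R ⊔ K).trans hik ((R ⊔ K).symm h))
  obtain ⟨u', v', huk, hkv, huv', hju⟩ := hK.exists_rel_jump hjl hjk hkl hkj
  have hu' : u' ∈ Set.Ioo u v := hR.mem_Ioo_of_sup_rel hK huv ⟨huj, hjv⟩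
    (fun h => hn ((R ⊔ K).trans hiu h)) hju
  have hu : u ∈ Set.Ioo u' v' := hR.mem_Ioo_of_sup_rel hK huv' ⟨huk, hkv⟩
    (fun h => hkj ((R ⊔ K).trans hju h))
    ((R ⊔ K).trans ((R ⊔ K).symm hik) hiu)
  exact hu.1.not_gt hu'.1

end Noncrossing

section CyclicNext

variable {ι : Type*} [LinearOrder ι] {R : Setoid ι} {s : Finset ι} {c c' d k k' : ι}

/-- `d` follows `c` in the cyclic order of the class of `c` in `s`: it is the next larger element
of that class or, when `c` is the largest one, the least element. -/
def IsCyclicNext (R : Setoid ι) (s : Finset ι) (c d : ι) : Prop :=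
  d ∈ s ∧ R c d ∧ ((c < d ∧ ∀ k ∈ s, c < k → k < d → ¬ R c k) ∨
    (d ≤ c ∧ ∀ k ∈ s, R c k → d ≤ k ∧ k ≤ c))

/-- The points lying under the arc from the right-hand side of `c` to the left-hand side of `d`:
those strictly between the two if `c < d`, and those from `d` to `c` inclusive otherwise. -/
def IsUnderArc (c d k : ι) : Prop :=
  (c < k ∧ k < d) ∨ (d ≤ k ∧ k ≤ c)

lemma exists_isCyclicNext (R : Setoid ι) (hc : c ∈ s) : ∃ d, IsCyclicNext R s c d := by
  classical
  rcases ({j ∈ s | c < j ∧ R c j} : Finset ι).eq_empty_or_nonempty with hlast | hne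
  · have hself : ({j ∈ s | R c j} : Finset ι).Nonempty := ⟨c, by simp [hc]⟩
    obtain ⟨d, hd⟩ := Finset.exists_minimal hself
    have hd' := Finset.mem_filter.1 hd.prop
    have hle : ∀ k ∈ s, R c k → d ≤ k ∧ k ≤ c := fun k hk hck =>
      ⟨le_of_not_gt fun hkd => (hd.le_of_le (by simp [hk, hck]) hkd.le).not_gt hkd,
        le_of_not_gt fun hkc => (Finset.filter_eq_empty_iff.1 hlast) hk ⟨hkc, hck⟩⟩
    exact ⟨d, hd'.1, hd'.2, .inr ⟨(hle c hc (R.refl c)).1, hle⟩⟩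
  · obtain ⟨d, hd⟩ := Finset.exists_minimal hne
    obtain ⟨hds, hcd, hR⟩ := Finset.mem_filter.1 hd.prop
    exact ⟨d, hds, hR, .inl ⟨hcd, fun k hk hck hkd hRk =>
      (hd.le_of_le (by simp [hk, hck, hRk]) hkd.le).not_gt hkd⟩⟩

lemma IsCyclicNext.eq_of_eq (hc : c ∈ s) (hc' : c' ∈ s) (h : IsCyclicNext R s c d)
    (h' : IsCyclicNext R s c' d) : c = c' := by
  wlog hlt : c < c' generalizing c c'
  · exact (not_lt.1 hlt).eq_or_lt.elim Eq.symm fun hgt => (this hc' hc h' h hgt).symm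
  obtain ⟨-, hcd, hnext⟩ := h
  obtain ⟨-, hcd', hnext'⟩ := h'
  have hcc' : R c c' := R.trans hcd (R.symm hcd')
  rcases hnext with ⟨hlt_d, hgap⟩ | ⟨-, hbd⟩
  · rcases hnext' with ⟨hlt_d', -⟩ | ⟨-, hbd'⟩
    · exact absurd hcc' (hgap c' hc' hlt hlt_d')
    · exact absurd hlt_d (hbd' c hc (R.symm hcc')).1.not_gt
  · exact absurd hlt (hbd c' hc' hcc').2.not_gt

lemma IsCyclicNext.isUnderArc_of_rel (hR : IsNoncrossing R) (h : IsCyclicNext R s c d)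
    (hk : k ∈ s) (hk' : k' ∈ s) (hkk' : R k k') (harc : IsUnderArc c d k) :
    IsUnderArc c d k' := by
  obtain ⟨-, hcd, ⟨hlt, hgap⟩ | ⟨hle, hbd⟩⟩ := h
  · obtain ⟨hck, hkd⟩ : c < k ∧ k < d := harc.resolve_right fun h => by order
    have hnot : ¬ R c k := hgap k hk hck hkd
    refine .inl ⟨lt_of_not_ge fun hk'c => ?_, lt_of_not_ge fun hdk' => ?_⟩
    · rcases hk'c.eq_or_lt with rfl | hk'c
      · exact hnot (R.symm hkk')
      · exact hnot (R.trans (R.symm (hR hk'c hck hkd (R.symm hkk') hcd)) (R.symm hkk'))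
    · rcases hdk'.eq_or_lt with rfl | hdk'
      · exact hnot (R.trans hcd (R.symm hkk'))
      · exact hnot (hR hck hkd hdk' hcd hkk')
  · obtain ⟨hdk, hkc⟩ : d ≤ k ∧ k ≤ c := harc.resolve_left fun h => by order
    by_cases hck : R c k
    · exact .inr (hbd k' hk' (R.trans hck hkk'))
    have hdk : d < k := hdk.lt_of_ne (by rintro rfl; exact hck hcd)
    have hkc : k < c := hkc.lt_of_ne (by rintro rfl; exact hck (R.refl k))
    refine .inr ⟨le_of_not_gt fun hk'd => ?_, le_of_not_gt fun hck' => ?_⟩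
    · have hk'_d := hR hk'd hdk hkc (R.symm hkk') (R.symm hcd)
      exact hck (R.trans hcd (R.trans (R.symm hk'_d) (R.symm hkk')))
    · exact hck (R.trans hcd (hR hdk hkc hck' (R.symm hcd) hkk'))

lemma IsCyclicNext.isUnderArc_iff_of_rel (hR : IsNoncrossing R) (h : IsCyclicNext R s c d)
    (hk : k ∈ s) (hk' : k' ∈ s) (hkk' : R k k') : IsUnderArc c d k ↔ IsUnderArc c d k' :=
  ⟨h.isUnderArc_of_rel hR hk hk' hkk', h.isUnderArc_of_rel hR hk' hk (R.symm hkk')⟩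

lemma surjOn_of_isCyclicNext {φ : ι → ι} (hφ : ∀ c ∈ s, IsCyclicNext R s c (φ c)) :
    Set.SurjOn φ s s :=
  Finset.surjOn_of_injOn_of_card_le φ (fun c hc => (hφ c hc).1)
    (fun c hc c' hc' heq => (hφ c hc).eq_of_eq hc hc' (heq ▸ hφ c' hc')) le_rfl

end CyclicNext

section Gaps

variable {ℓ : ℕ} {r : ℕ → ℕ} {E : Finset ℕ} {R : Setoid ℕ} {i j : ℕ}

/-- The relation of lying in the same gap of `E`, where `e` belongs to the gap on its left; it
encodes the subgroup `Ksub`. Index `0`, which stands for nothing, is a class of its own; indices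
beyond `ℓ`, which all stand for the element `0` of `B_λ`, lie in the last gap. -/
def gapSetoid (E : Finset ℕ) : Setoid ℕ where
  r i j := ∀ e ∈ insert 0 E, i ≤ e ↔ j ≤ e
  iseqv := ⟨fun _ _ _ => Iff.rfl, fun h e he => (h e he).symm,
    fun h h' e he => (h e he).trans (h' e he)⟩

lemma hasConvexClasses_gapSetoid (E : Finset ℕ) : HasConvexClasses (gapSetoid E) :=
  fun _ _ _ hij hjk hik e he => ⟨fun hie => hjk.trans ((hik e he).1 hie), hij.trans⟩

lemma gapSetoid_succ_iff : gapSetoid E i (i + 1) ↔ i ∉ insert 0 E :=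
  ⟨fun h hi => absurd ((h i hi).1 le_rfl) (by omega), fun hi e he => by grind⟩

lemma gapSetoid_le_iff : gapSetoid E ≤ R ↔ ∀ i ∉ insert 0 E, R i (i + 1) := by
  refine ⟨fun h i hi => h (gapSetoid_succ_iff.2 hi), fun hstep i j hij => ?_⟩
  wlog hle : i ≤ j generalizing i j
  · exact R.symm (this j i ((gapSetoid E).symm hij) (by omega))
  induction j, hle using Nat.le_induction with
  | base => exact R.refl i
  | succ n hin ih =>
    have hin' : gapSetoid E i n := hasConvexClasses_gapSetoid E hin n.le_succ hij
    have hnn : gapSetoid E n (n + 1) := (gapSetoid E).trans ((gapSetoid E).symm hin') hij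
    exact R.trans (ih hin') (hstep n (gapSetoid_succ_iff.1 hnn))

/-- The set `{m_1, …, m_e}` of indices with even partial sum. -/
def evenIndices (ℓ : ℕ) (r : ℕ → ℕ) : Finset ℕ :=
  (Finset.Icc 1 ℓ).filter (fun m => Even (∑ j ∈ Finset.Icc 1 m, r j))

lemma evenIndices_subset (ℓ : ℕ) (r : ℕ → ℕ) : evenIndices ℓ r ⊆ Finset.Icc 1 ℓ :=
  Finset.filter_subset _ _

lemma even_sum_of_mem_insert (hi : i ∈ insert 0 (evenIndices ℓ r)) :
    Even (∑ j ∈ Finset.Icc 1 i, r j) := by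
  rcases Finset.mem_insert.1 hi with rfl | hi
  · simp
  · exact (Finset.mem_filter.1 hi).2

end Gaps

section Generators

variable {ℓ : ℕ} {r : ℕ → ℕ} {E : Finset ℕ} {σ : Finset (Finset ℕ)} {R : Setoid ℕ} {i j d : ℕ}
  {W : AddSubgroup (Fin ℓ → ZMod 2)}

lemma tgen_eq_zero (hi : ℓ < i) : tgen ℓ i = 0 :=
  funext fun j => if_neg (by omega)

/-- Two indices are related when the generators `t_i`, `t_j` agree modulo `W`. Every subgroup in
the theorem is described by the relations it forces here. -/
def genSetoid (W : AddSubgroup (Fin ℓ → ZMod 2)) : Setoid ℕ :=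
  Setoid.ker fun i => (tgen ℓ i : (Fin ℓ → ZMod 2) ⧸ W)

lemma genSetoid_iff : genSetoid W i j ↔ tgen ℓ i + tgen ℓ j ∈ W := by
  rw [genSetoid, Setoid.ker_def, QuotientAddGroup.eq, ZModModule.neg_eq_self]

lemma Ksub_le_iff : Ksub ℓ r ≤ W ↔ gapSetoid (evenIndices ℓ r) ≤ genSetoid W := by
  rw [Ksub, AddSubgroup.closure_le, gapSetoid_le_iff]
  constructor
  · intro h i hi
    rw [genSetoid_iff]
    rcases le_or_gt i ℓ with hiℓ | hiℓ
    · have hi1 : i ∈ Finset.Icc 1 ℓ := by grind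
      exact h ⟨i, hi1, by grind [evenIndices], rfl⟩
    · simp [tgen_eq_zero hiℓ, tgen_eq_zero (hiℓ.trans i.lt_succ_self)]
  · rintro h _ ⟨m, hm, hodd, rfl⟩
    exact genSetoid_iff.1 (h m (by grind [evenIndices]))

lemma exists_nextT_eq_tgen (ℓ : ℕ) (E : Finset ℕ) (d : ℕ) :
    ∃ m, gapSetoid E (d + 1) m ∧ nextT ℓ E d = tgen ℓ m := by
  unfold nextT
  split_ifs with h
  · refine ⟨_, fun e he => ?_, rfl⟩
    have hmin := Finset.mem_filter.1 (Finset.min'_mem _ h)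
    have hle : e ∈ E → d < e → (E.filter (d < ·)).min' h ≤ e := fun heE hde =>
      Finset.min'_le _ _ (Finset.mem_filter.2 ⟨heE, hde⟩)
    grind
  · refine ⟨max (d + 1) (ℓ + 1), fun e he => ?_, (tgen_eq_zero (by omega)).symm⟩
    have hed : e ≤ d := by
      rcases Finset.mem_insert.1 he with rfl | he
      · exact d.zero_le
      · exact not_lt.1 fun hde => h ⟨e, Finset.mem_filter.2 ⟨he, hde⟩⟩
    omega

/-- The relation `R` on indices is the one drawn by the blocks `{2c, 2d + 1}`, `c ≤ d`, of `σ`,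
each seen as an arc joining `c` to the gap that follows `d`. -/
structure IsArcPresentation (E : Finset ℕ) (σ : Finset (Finset ℕ)) (R : Setoid ℕ) : Prop where
  gap_le : gapSetoid E ≤ R
  eq_zero : ∀ j, R 0 j → j = 0
  rel_of_arc : ∀ c ∈ E, ∀ d ∈ E, c ≤ d → {2 * c, 2 * d + 1} ∈ σ → R c (d + 1)
  exists_arc : ∀ i ∈ E, ∀ j, i < j → R i j → ∃ d ∈ E, i ≤ d ∧ d < j ∧ {2 * i, 2 * d + 1} ∈ σ

lemma IsArcPresentation.le_of_arc (h : IsArcPresentation E σ R) {S : Setoid ℕ}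
    (hgap : gapSetoid E ≤ S)
    (harc : ∀ c ∈ E, ∀ d ∈ E, c ≤ d → {2 * c, 2 * d + 1} ∈ σ → S c (d + 1)) : R ≤ S := by
  suffices H : ∀ n i j, j - i = n → i ≤ j → R i j → S i j by
    intro i j hij
    rcases le_total i j with hle | hle
    · exact H _ i j rfl hle hij
    · exact S.symm (H _ j i rfl hle (R.symm hij))
  intro n
  induction n using Nat.strong_induction_on with
  | _ n ih =>
    intro i j hn hle hij
    rcases hle.eq_or_lt with rfl | hlt
    · exact S.refl i
    have through {k : ℕ} (hik : i < k) (hkj : k ≤ j) (hR : R i k) (hS : S i k) : S i j :=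
      S.trans hS (ih (j - k) (by omega) k j rfl hkj (R.trans (R.symm hR) hij))
    by_cases hi : i ∈ insert 0 E
    · rcases Finset.mem_insert.1 hi with rfl | hiE
      · exact absurd (h.eq_zero j hij) (by omega)
      · obtain ⟨d, hd, hid, hdj, hσ⟩ := h.exists_arc i hiE j hlt hij
        exact through (by omega) hdj (h.rel_of_arc i hiE d hd hid hσ) (harc i hiE d hd hid hσ)
    · have hgap' := gapSetoid_succ_iff.2 hi
      exact through (by omega) hlt (h.gap_le hgap') (hgap hgap')

lemma IsArcPresentation.closure_tlGens_le_iff (h : IsArcPresentation E σ R)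
    (hW : gapSetoid E ≤ genSetoid W) :
    AddSubgroup.closure (tlGens ℓ E σ) ≤ W ↔ R ≤ genSetoid W := by
  have arc_iff (c d : ℕ) : tgen ℓ c + nextT ℓ E d ∈ W ↔ genSetoid W c (d + 1) := by
    obtain ⟨m, hm, hnext⟩ := exists_nextT_eq_tgen ℓ E d
    rw [hnext, ← genSetoid_iff]
    exact ⟨fun h => (genSetoid W).trans h ((genSetoid W).symm (hW hm)),
      fun h => (genSetoid W).trans h (hW hm)⟩
  rw [AddSubgroup.closure_le]
  constructor
  · intro hgen
    exact h.le_of_arc hW fun c hc d hd hcd hσ =>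
      (arc_iff c d).1 (hgen ⟨c, hc, d, hd, hcd, hσ, rfl⟩)
  · rintro hR _ ⟨c, hc, d, hd, hcd, hσ, rfl⟩
    exact (arc_iff c d).2 (hR (h.rel_of_arc c hc d hd hcd hσ))

lemma IsArcPresentation.closure_tlGens_sup_Ksub_le_iff
    (h : IsArcPresentation (evenIndices ℓ r) σ R) :
    AddSubgroup.closure (tlGens ℓ (evenIndices ℓ r) σ) ⊔ Ksub ℓ r ≤ W ↔ R ≤ genSetoid W := by
  rw [sup_le_iff, Ksub_le_iff]
  exact ⟨fun hW => (h.closure_tlGens_le_iff hW.2).1 hW.1, fun hR =>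
    have hgap := h.gap_le.trans hR
    ⟨(h.closure_tlGens_le_iff hgap).2 hR, hgap⟩⟩

end Generators

section Partition

variable {B : Finset ℕ} {P : Finset (Finset ℕ)} {L L' : Finset ℕ} {a : ℕ}

lemma IsPartitionOf.eq_of_mem (hP : IsPartitionOf B P) (hL : L ∈ P) (hL' : L' ∈ P) (ha : a ∈ L)
    (ha' : a ∈ L') : L = L' :=
  (hP.2.2 a (hP.2.1 L hL ha)).unique ⟨hL, ha⟩ ⟨hL', ha'⟩

lemma IsPartitionOf.pairwiseNoncrossing_iff (hP : IsPartitionOf B P) :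
    PairwiseNoncrossing P ↔ ∀ L ∈ P, ∀ L' ∈ P, ∀ a ∈ L, ∀ b ∈ L', ∀ c ∈ L, ∀ d ∈ L',
      a < b → b < c → c < d → L = L' := by
  constructor
  · intro h L hL L' hL' a ha b hb c hc d hd hab hbc hcd
    by_contra hne
    rcases h L hL L' hL' hne a ha c hc b hb d hd (by omega) (by omega) with h | h | h
    · exact absurd (Finset.ext_iff.1 h b) (by simp; omega)
    · exact absurd (Finset.mem_Icc.1 (h (Finset.left_mem_Icc.2 (by omega)))) (by omega)
    · exact absurd (Finset.mem_Icc.1 (h (Finset.right_mem_Icc.2 (by omega)))) (by omega)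
  · intro h L hL L' hL' hne a ha b hb c hc d hd hab hcd
    have ne {u v : ℕ} (hu : u ∈ L) (hv : v ∈ L') : u ≠ v := by
      rintro rfl; exact hne (hP.eq_of_mem hL hL' hu hv)
    have hac := ne ha hc
    have hbd := ne hb hd
    have hbc := ne hb hc
    have had := ne ha hd
    by_cases hdisj : b < c ∨ d < a
    · refine .inl (Finset.eq_empty_of_forall_notMem fun z => ?_)
      simp only [Finset.mem_inter, Finset.mem_Icc]
      omega
    have hcross : ¬ (a < c ∧ c < b ∧ b < d) := fun g =>
      hne (h L hL L' hL' a ha c hc b hb d hd g.1 g.2.1 g.2.2)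
    have hcross' : ¬ (c < a ∧ a < d ∧ d < b) := fun g =>
      hne (h L' hL' L hL c hc a ha d hd b hb g.1 g.2.1 g.2.2).symm
    rcases lt_or_ge a c with hlt | hge
    · exact .inr (.inr (Finset.Icc_subset_Icc (by omega) (by omega)))
    · exact .inr (.inl (Finset.Icc_subset_Icc (by omega) (by omega)))

end Partition

section Mark

variable {ℓ : ℕ} {x : ℕ → ℕ} {E : Finset ℕ} {i j b : ℕ}

/-- The element of `B_λ` with index `i`: `2 * x i` for `1 ≤ i ≤ ℓ` and `0` beyond. The indices run
in the direction opposite to the elements. -/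
def mark (ℓ : ℕ) (x : ℕ → ℕ) (i : ℕ) : ℕ :=
  if i ≤ ℓ then 2 * x i else 0

lemma mark_of_le (hi : i ≤ ℓ) : mark ℓ x i = 2 * x i :=
  if_pos hi

lemma mark_of_lt (hi : ℓ < i) : mark ℓ x i = 0 :=
  if_neg hi.not_ge

lemma mem_Blam_iff : b ∈ Blam ℓ x ↔ ∃ i ≠ 0, mark ℓ x i = b := by
  simp only [Blam, Finset.mem_insert, Finset.mem_image, Finset.mem_Icc]
  constructor
  · rintro (rfl | ⟨i, hi, rfl⟩)
    · exact ⟨ℓ + 1, by omega, mark_of_lt (by omega)⟩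
    · exact ⟨i, by omega, mark_of_le hi.2⟩
  · rintro ⟨i, hi, rfl⟩
    rcases le_or_gt i ℓ with hiℓ | hiℓ
    · exact .inr ⟨i, by omega, (mark_of_le hiℓ).symm⟩
    · exact .inl (mark_of_lt hiℓ)

lemma mark_lt_mark (hx : ∀ i ∈ Finset.Icc 1 ℓ, ∀ j ∈ Finset.Icc 1 ℓ, i < j → x j < x i)
    (hxpos : ∀ i ∈ Finset.Icc 1 ℓ, 0 < x i) (hi : i ∈ Finset.Icc 1 ℓ) (hij : i < j) :
    mark ℓ x j < mark ℓ x i := by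
  rw [mark_of_le (Finset.mem_Icc.1 hi).2]
  rcases le_or_gt j ℓ with hjℓ | hjℓ
  · have := hx i hi j (by grind) hij
    rw [mark_of_le hjℓ]
    omega
  · have := hxpos i hi
    rw [mark_of_lt hjℓ]
    omega

lemma mark_le_mark (hx : ∀ i ∈ Finset.Icc 1 ℓ, ∀ j ∈ Finset.Icc 1 ℓ, i < j → x j < x i)
    (hxpos : ∀ i ∈ Finset.Icc 1 ℓ, 0 < x i) (hi : i ≠ 0) (hij : i ≤ j) :
    mark ℓ x j ≤ mark ℓ x i := by
  rcases hij.eq_or_lt with rfl | hlt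
  · exact le_rfl
  rcases le_or_gt i ℓ with hiℓ | hiℓ
  · exact (mark_lt_mark hx hxpos (by grind) hlt).le
  · rw [mark_of_lt hiℓ, mark_of_lt (hiℓ.trans hlt)]

lemma gapSetoid_of_mark_eq (hx : ∀ i ∈ Finset.Icc 1 ℓ, ∀ j ∈ Finset.Icc 1 ℓ, i < j → x j < x i)
    (hxpos : ∀ i ∈ Finset.Icc 1 ℓ, 0 < x i) (hE : E ⊆ Finset.Icc 1 ℓ) (hi : i ≠ 0) (hj : j ≠ 0)
    (hij : mark ℓ x i = mark ℓ x j) : gapSetoid E i j := by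
  wlog hlt : i < j generalizing i j
  · rcases (not_lt.1 hlt).eq_or_lt with rfl | hlt
    · exact (gapSetoid E).refl j
    · exact (gapSetoid E).symm (this hj hi hij.symm hlt)
  have hiℓ : ℓ < i := not_le.1 fun hiℓ =>
    (mark_lt_mark hx hxpos (by grind) hlt).ne' hij
  intro e he
  grind

end Mark

section Blocks

variable {ℓ : ℕ} {x r : ℕ → ℕ} {P : Finset (Finset ℕ)} {i j : ℕ} {W : AddSubgroup (Fin ℓ → ZMod 2)}

/-- The partition `P` of `B_λ`, as an equivalence relation on indices in which `0` is isolated. -/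
def blockSetoid (ℓ : ℕ) (x : ℕ → ℕ) (P : Finset (Finset ℕ)) : Setoid ℕ where
  r i j := (i = 0 ↔ j = 0) ∧ ∀ L ∈ P, mark ℓ x i ∈ L ↔ mark ℓ x j ∈ L
  iseqv := ⟨fun _ => ⟨Iff.rfl, fun _ _ => Iff.rfl⟩,
    fun h => ⟨h.1.symm, fun L hL => (h.2 L hL).symm⟩,
    fun h h' => ⟨h.1.trans h'.1, fun L hL => (h.2 L hL).trans (h'.2 L hL)⟩⟩

lemma blockSetoid_of_mem (hP : IsPartitionOf (Blam ℓ x) P) (hi : i ≠ 0) (hj : j ≠ 0)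
    {L : Finset ℕ} (hL : L ∈ P) (hiL : mark ℓ x i ∈ L) (hjL : mark ℓ x j ∈ L) :
    blockSetoid ℓ x P i j :=
  ⟨by omega, fun L' hL' => ⟨fun h => hP.eq_of_mem hL hL' hiL h ▸ hjL,
    fun h => hP.eq_of_mem hL hL' hjL h ▸ hiL⟩⟩

lemma exists_mem_of_blockSetoid (hP : IsPartitionOf (Blam ℓ x) P) (hi : i ≠ 0)
    (hij : blockSetoid ℓ x P i j) : j ≠ 0 ∧ ∃ L ∈ P, mark ℓ x i ∈ L ∧ mark ℓ x j ∈ L := by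
  obtain ⟨L, ⟨hL, hiL⟩, -⟩ := hP.2.2 _ (mem_Blam_iff.2 ⟨i, hi, rfl⟩)
  exact ⟨hi ∘ hij.1.2, L, hL, hiL, (hij.2 L hL).1 hiL⟩

lemma IsNCP.isNoncrossing_blockSetoid
    (hx : ∀ i ∈ Finset.Icc 1 ℓ, ∀ j ∈ Finset.Icc 1 ℓ, i < j → x j < x i)
    (hxpos : ∀ i ∈ Finset.Icc 1 ℓ, 0 < x i) (hP : IsNCP (Blam ℓ x) P) :
    IsNoncrossing (blockSetoid ℓ x P) := by
  intro i j k l hij hjk hkl hik hjl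
  set R := blockSetoid ℓ x P
  rcases eq_or_ne i 0 with rfl | hi
  · exact absurd (hik.1.1 rfl) (by omega)
  obtain ⟨-, L, hL, hiL, hkL⟩ := exists_mem_of_blockSetoid hP.1 hi hik
  obtain ⟨-, L', hL', hjL, hlL⟩ := exists_mem_of_blockSetoid hP.1 (by omega) hjl
  have rel_of_eq {u v : ℕ} (hu : u ≠ 0) (hv : v ≠ 0) (huv : mark ℓ x u = mark ℓ x v) : R u v :=
    ⟨by omega, fun _ _ => by rw [huv]⟩
  rcases (mark_le_mark hx hxpos hi hij.le).eq_or_lt with heq | hji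
  · exact rel_of_eq hi (by omega) heq.symm
  rcases (mark_le_mark hx hxpos (by omega) hjk.le).eq_or_lt with heq | hkj
  · exact R.trans hik (rel_of_eq (by omega) (by omega) heq)
  rcases (mark_le_mark hx hxpos (by omega) hkl.le).eq_or_lt with heq | hlk
  · exact R.trans hik (R.trans (rel_of_eq (by omega) (by omega) heq.symm) (R.symm hjl))
  have hLL' := hP.1.pairwiseNoncrossing_iff.1 hP.2 L' hL' L hL _ hlL _ hkL _ hjL _ hiL hlk hkj hji
  exact blockSetoid_of_mem hP.1 hi (by omega) hL hiL (hLL' ▸ hjL)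

lemma ncpSubgroup_le_iff (hP : IsPartitionOf (Blam ℓ x) P) :
    ncpSubgroup ℓ x P ≤ W ↔ blockSetoid ℓ x P ≤ genSetoid W := by
  rw [ncpSubgroup, AddSubgroup.closure_le]
  constructor
  · intro h i j hij
    rcases eq_or_ne i 0 with rfl | hi
    · obtain rfl := hij.1.1 rfl
      exact (genSetoid W).refl 0
    obtain ⟨hj, L, hL, hiL, hjL⟩ := exists_mem_of_blockSetoid hP hi hij
    rw [genSetoid_iff]
    by_cases h0 : 0 ∈ L
    · have tgen_mem {k : ℕ} (hk : k ≠ 0) (hkL : mark ℓ x k ∈ L) : tgen ℓ k ∈ W := by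
        rcases le_or_gt k ℓ with hkℓ | hkℓ
        · exact h (.inr ⟨L, hL, h0, k, by grind, mark_of_le hkℓ ▸ hkL, rfl⟩)
        · exact tgen_eq_zero hkℓ ▸ W.zero_mem
      exact W.add_mem (tgen_mem hi hiL) (tgen_mem hj hjL)
    · have le_ℓ {k : ℕ} (hkL : mark ℓ x k ∈ L) : k ≤ ℓ :=
        not_lt.1 fun hkℓ => h0 (mark_of_lt hkℓ ▸ hkL)
      have hiℓ := le_ℓ hiL
      have hjℓ := le_ℓ hjL
      exact h (.inl ⟨L, hL, h0, i, by grind, j, by grind, mark_of_le hiℓ ▸ hiL,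
        mark_of_le hjℓ ▸ hjL, rfl⟩)
  · rintro h _ (⟨L, hL, -, i, hi, j, hj, hiL, hjL, rfl⟩ | ⟨L, hL, h0, i, hi, hiL, rfl⟩)
    · rw [← mark_of_le (Finset.mem_Icc.1 hi).2] at hiL
      rw [← mark_of_le (Finset.mem_Icc.1 hj).2] at hjL
      exact genSetoid_iff.1 (h (blockSetoid_of_mem hP (by grind) (by grind) hL hiL hjL))
    · rw [← mark_of_le (Finset.mem_Icc.1 hi).2] at hiL
      rw [← mark_of_lt (x := x) ℓ.lt_succ_self] at h0
      simpa [tgen_eq_zero ℓ.lt_succ_self] using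
        genSetoid_iff.1 (h (blockSetoid_of_mem hP (by grind) (by omega) hL hiL h0))

lemma ncpSubgroup_sup_Ksub_le_iff (hP : IsPartitionOf (Blam ℓ x) P) :
    ncpSubgroup ℓ x P ⊔ Ksub ℓ r ≤ W ↔
      blockSetoid ℓ x P ⊔ gapSetoid (evenIndices ℓ r) ≤ genSetoid W := by
  rw [sup_le_iff, sup_le_iff, ncpSubgroup_le_iff hP, Ksub_le_iff]

end Blocks

section PartitionOfRelation

variable {ℓ : ℕ} {x r : ℕ → ℕ} {E : Finset ℕ} {R : Setoid ℕ} {i j z : ℕ}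

open Classical in
/-- The elements of `B_λ` whose index is related to `i`. -/
noncomputable def relBlock (ℓ : ℕ) (x : ℕ → ℕ) (R : Setoid ℕ) (i : ℕ) : Finset ℕ :=
  ((Finset.Icc 1 (ℓ + 1)).filter (R i)).image (mark ℓ x)

open Classical in
/-- The partition of `B_λ` given by an equivalence relation on indices, inverse to `blockSetoid`
on the relations coarser than a `gapSetoid`. -/
noncomputable def ncpOf (ℓ : ℕ) (x : ℕ → ℕ) (R : Setoid ℕ) : Finset (Finset ℕ) :=
  (Finset.Icc 1 (ℓ + 1)).image (relBlock ℓ x R)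

lemma relBlock_congr (hij : R i j) : relBlock ℓ x R i = relBlock ℓ x R j := by
  have hR : (R i · ) = (R j ·) := funext fun k => propext
    ⟨fun h => R.trans (R.symm hij) h, fun h => R.trans hij h⟩
  unfold relBlock
  congr 2

lemma mem_relBlock_iff (hE : E ⊆ Finset.Icc 1 ℓ) (hgap : gapSetoid E ≤ R) :
    z ∈ relBlock ℓ x R i ↔ ∃ j ≠ 0, mark ℓ x j = z ∧ R i j := by
  simp only [relBlock, Finset.mem_image, Finset.mem_filter, Finset.mem_Icc]
  constructor
  · rintro ⟨j, ⟨hj, hij⟩, hz⟩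
    exact ⟨j, by omega, hz, hij⟩
  · rintro ⟨j, hj, hz, hij⟩
    rcases le_or_gt j ℓ with hjℓ | hjℓ
    · exact ⟨j, ⟨by omega, hij⟩, hz⟩
    · have hlast : gapSetoid E j (ℓ + 1) := fun e he => by grind
      exact ⟨ℓ + 1, ⟨by omega, R.trans hij (hgap hlast)⟩,
        (mark_of_lt ℓ.lt_succ_self).trans ((mark_of_lt hjℓ).symm.trans hz)⟩

lemma mark_mem_relBlock_iff
    (hx : ∀ i ∈ Finset.Icc 1 ℓ, ∀ j ∈ Finset.Icc 1 ℓ, i < j → x j < x i)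
    (hxpos : ∀ i ∈ Finset.Icc 1 ℓ, 0 < x i) (hE : E ⊆ Finset.Icc 1 ℓ) (hgap : gapSetoid E ≤ R)
    (hj : j ≠ 0) : mark ℓ x j ∈ relBlock ℓ x R i ↔ R i j := by
  rw [mem_relBlock_iff hE hgap]
  constructor
  · rintro ⟨k, hk, hkj, hik⟩
    exact R.trans hik (hgap (gapSetoid_of_mark_eq hx hxpos hE hk hj hkj))
  · exact fun hij => ⟨j, hj, rfl, hij⟩

lemma mem_ncpOf_iff (hE : E ⊆ Finset.Icc 1 ℓ) (hgap : gapSetoid E ≤ R) {L : Finset ℕ} :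
    L ∈ ncpOf ℓ x R ↔ ∃ i ≠ 0, relBlock ℓ x R i = L := by
  simp only [ncpOf, Finset.mem_image, Finset.mem_Icc]
  constructor
  · rintro ⟨i, hi, rfl⟩
    exact ⟨i, by omega, rfl⟩
  · rintro ⟨i, hi, rfl⟩
    rcases le_or_gt i ℓ with hiℓ | hiℓ
    · exact ⟨i, by omega, rfl⟩
    · have hlast : gapSetoid E (ℓ + 1) i := fun e he => by grind
      exact ⟨ℓ + 1, by omega, relBlock_congr (hgap hlast)⟩

lemma isPartitionOf_ncpOf
    (hx : ∀ i ∈ Finset.Icc 1 ℓ, ∀ j ∈ Finset.Icc 1 ℓ, i < j → x j < x i)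
    (hxpos : ∀ i ∈ Finset.Icc 1 ℓ, 0 < x i) (hE : E ⊆ Finset.Icc 1 ℓ) (hgap : gapSetoid E ≤ R) :
    IsPartitionOf (Blam ℓ x) (ncpOf ℓ x R) := by
  simp only [IsPartitionOf, mem_ncpOf_iff hE hgap]
  refine ⟨?_, ?_, ?_⟩
  · rintro _ ⟨i, hi, rfl⟩
    exact ⟨mark ℓ x i, (mark_mem_relBlock_iff hx hxpos hE hgap hi).2 (R.refl i)⟩
  · rintro _ ⟨i, -, rfl⟩ z hz
    obtain ⟨j, hj, hjz, -⟩ := (mem_relBlock_iff hE hgap).1 hz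
    exact mem_Blam_iff.2 ⟨j, hj, hjz⟩
  · intro b hb
    obtain ⟨i, hi, rfl⟩ := mem_Blam_iff.1 hb
    refine ⟨relBlock ℓ x R i,
      ⟨⟨i, hi, rfl⟩, (mark_mem_relBlock_iff hx hxpos hE hgap hi).2 (R.refl i)⟩, ?_⟩
    rintro _ ⟨⟨j, -, rfl⟩, hij⟩
    exact relBlock_congr ((mark_mem_relBlock_iff hx hxpos hE hgap hi).1 hij)

lemma isNCP_ncpOf (hx : ∀ i ∈ Finset.Icc 1 ℓ, ∀ j ∈ Finset.Icc 1 ℓ, i < j → x j < x i)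
    (hxpos : ∀ i ∈ Finset.Icc 1 ℓ, 0 < x i) (hE : E ⊆ Finset.Icc 1 ℓ) (hgap : gapSetoid E ≤ R)
    (hR : IsNoncrossing R) : IsNCP (Blam ℓ x) (ncpOf ℓ x R) := by
  have hpart := isPartitionOf_ncpOf hx hxpos hE hgap
  refine ⟨hpart, hpart.pairwiseNoncrossing_iff.2 ?_⟩
  simp only [mem_ncpOf_iff hE hgap]
  rintro _ ⟨u, -, rfl⟩ _ ⟨v, -, rfl⟩ a ha b hb c hc d hd hab hbc hcd
  obtain ⟨i, hi, rfl, hui⟩ := (mem_relBlock_iff hE hgap).1 ha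
  obtain ⟨j, hj, rfl, hvj⟩ := (mem_relBlock_iff hE hgap).1 hb
  obtain ⟨k, hk, rfl, huk⟩ := (mem_relBlock_iff hE hgap).1 hc
  obtain ⟨l, -, rfl, hvl⟩ := (mem_relBlock_iff hE hgap).1 hd
  have lt_of_mark_lt {p q : ℕ} (hp : p ≠ 0) (h : mark ℓ x p < mark ℓ x q) : q < p :=
    lt_of_not_ge fun hpq => (mark_le_mark hx hxpos hp hpq).not_gt h
  have hlk : R l k := hR (lt_of_mark_lt hk hcd) (lt_of_mark_lt hj hbc) (lt_of_mark_lt hi hab)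
    (R.trans (R.symm hvl) hvj) (R.trans (R.symm huk) hui)
  exact relBlock_congr (R.trans huk (R.trans (R.symm hlk) (R.symm hvl)))

lemma blockSetoid_ncpOf
    (hx : ∀ i ∈ Finset.Icc 1 ℓ, ∀ j ∈ Finset.Icc 1 ℓ, i < j → x j < x i)
    (hxpos : ∀ i ∈ Finset.Icc 1 ℓ, 0 < x i) (hE : E ⊆ Finset.Icc 1 ℓ) (hgap : gapSetoid E ≤ R)
    (h0 : ∀ j, R 0 j → j = 0) : blockSetoid ℓ x (ncpOf ℓ x R) = R := by
  have mem_iff {i j : ℕ} (hj : j ≠ 0) : mark ℓ x j ∈ relBlock ℓ x R i ↔ R i j :=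
    mark_mem_relBlock_iff hx hxpos hE hgap hj
  ext i j
  rcases eq_or_ne i 0 with rfl | hi
  · refine ⟨fun h => ?_, fun h => ?_⟩
    · obtain rfl := h.1.1 rfl
      exact R.refl 0
    · obtain rfl := h0 j h
      exact (blockSetoid ℓ x _).refl 0
  constructor
  · rintro ⟨hij0, hij⟩
    exact (mem_iff (hi ∘ hij0.2)).1 ((hij _ ((mem_ncpOf_iff hE hgap).2 ⟨i, hi, rfl⟩)).1
      ((mem_iff hi).2 (R.refl i)))
  · intro hij
    have hj : j ≠ 0 := by rintro rfl; exact hi (h0 i (R.symm hij))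
    refine ⟨by omega, fun L hL => ?_⟩
    obtain ⟨k, -, rfl⟩ := (mem_ncpOf_iff hE hgap).1 hL
    rw [mem_iff hi, mem_iff hj]
    exact ⟨fun h => R.trans h hij, fun h => R.trans h (R.symm hij)⟩

/-- Summation by parts modulo `2`: the indicator of `S` changes only where the partial sums of `r`
are even. -/
lemma even_sum_filter_iff {S : ℕ → Prop} [DecidablePred S]
    (hS : ∀ m, Odd (∑ j ∈ Finset.Icc 1 m, r j) → (S m ↔ S (m + 1))) (m : ℕ) :
    Even (∑ j ∈ (Finset.Icc 1 m).filter S, r j) ↔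
      (S (m + 1) → Even (∑ j ∈ Finset.Icc 1 m, r j)) := by
  induction m with
  | zero => simp
  | succ n ih =>
    have hstep := hS (n + 1)
    rw [← Nat.not_even_iff_odd] at hstep
    rw [Finset.sum_filter] at ih ⊢
    rw [Finset.sum_Icc_succ_top (by omega)] at hstep ⊢
    rw [Finset.sum_Icc_succ_top (by omega)]
    by_cases hn : S (n + 1)
    · rw [if_pos hn, Nat.even_add, ih]
      rw [Nat.even_add] at hstep ⊢
      tauto
    · rw [if_neg hn, add_zero, ih]
      tauto

lemma isEvenNCP_ncpOf
    (hx : ∀ i ∈ Finset.Icc 1 ℓ, ∀ j ∈ Finset.Icc 1 ℓ, i < j → x j < x i)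
    (hxpos : ∀ i ∈ Finset.Icc 1 ℓ, 0 < x i) (hgap : gapSetoid (evenIndices ℓ r) ≤ R)
    (hR : IsNoncrossing R) : IsEvenNCP ℓ x r (ncpOf ℓ x R) := by
  classical
  have hE := evenIndices_subset ℓ r
  refine ⟨isNCP_ncpOf hx hxpos hE hgap hR, fun L hL h0 => ?_⟩
  obtain ⟨i, -, rfl⟩ := (mem_ncpOf_iff hE hgap).1 hL
  have hfilter : (Finset.Icc 1 ℓ).filter (fun j => 2 * x j ∈ relBlock ℓ x R i) =
      (Finset.Icc 1 ℓ).filter (R i) := by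
    refine Finset.filter_congr fun j hj => ?_
    rw [← mark_of_le (Finset.mem_Icc.1 hj).2,
      mark_mem_relBlock_iff hx hxpos hE hgap (by grind)]
  have hlast : ¬ R i (ℓ + 1) := by
    rwa [← mark_mem_relBlock_iff hx hxpos hE hgap (by omega), mark_of_lt ℓ.lt_succ_self]
  rw [hfilter, even_sum_filter_iff]
  · exact fun h => absurd h hlast
  · intro m hm
    have hm' : R m (m + 1) := gapSetoid_le_iff.1 hgap m fun hmem =>
      Nat.not_even_iff_odd.2 hm (even_sum_of_mem_insert hmem)
    exact ⟨fun h => R.trans h hm', fun h => R.trans h (R.symm hm')⟩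

end PartitionOfRelation

section ArcsToRelation

variable {E B Z M s : Finset ℕ} {σ : Finset (Finset ℕ)} {p q i j z : ℕ}

/-- The point set `Z = {1} ∪ {2m, 2m + 1 : m ∈ E}` of a Temperley–Lieb pattern. -/
def tlPoints (E : Finset ℕ) : Finset ℕ :=
  insert 1 (E.biUnion (fun m => ({2 * m, 2 * m + 1} : Finset ℕ)))

lemma mem_tlPoints_iff : z ∈ tlPoints E ↔ z = 1 ∨ z / 2 ∈ E := by
  simp only [tlPoints, Finset.mem_insert, Finset.mem_biUnion, Finset.mem_singleton]
  refine or_congr_right ⟨?_, fun h => ⟨z / 2, h, by omega⟩⟩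
  rintro ⟨m, hm, hz⟩
  rwa [show z / 2 = m by omega]

lemma IsPartitionOf.sum_card_inter (hσ : IsPartitionOf B σ) (hs : s ⊆ B) :
    ∑ M ∈ σ, (s ∩ M).card = s.card := by
  rw [Finset.sum_card_inter (n := 1), mul_one]
  intro a ha
  obtain ⟨M, hM, huniq⟩ := hσ.2.2 a (hs ha)
  refine Finset.card_eq_one.2 ⟨M, Finset.eq_singleton_iff_unique_mem.2 ?_⟩
  exact ⟨Finset.mem_filter.2 hM, fun M' hM' => huniq M' (Finset.mem_filter.1 hM')⟩

lemma IsTLPattern.exists_unpaired (hσ : IsTLPattern Z σ) :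
    ∃ d, Odd d ∧ (∀ a b, a < b → {a, b} ∈ σ → b < d ∨ d < a) ∧
      ∀ M ∈ σ, M = {d} ∨ ∃ a b, a < b ∧ M = {a, b} := by
  obtain ⟨-, -, _, -, d, hd, rfl, hpair⟩ := hσ
  refine ⟨d, hd, fun a b hab hM => ?_, fun M hM => ?_⟩
  · have hne : ({a, b} : Finset ℕ) ≠ {d} := fun h => by
      have hcard := congrArg Finset.card h
      rw [Finset.card_pair hab.ne, Finset.card_singleton] at hcard
      omega
    obtain ⟨a', b', hab', heq, hd⟩ := hpair _ hM hne
    have ha : a ∈ ({a', b'} : Finset ℕ) := heq ▸ by simp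
    have hb : b ∈ ({a', b'} : Finset ℕ) := heq ▸ by simp
    simp only [Finset.mem_insert, Finset.mem_singleton] at ha hb
    omega
  · refine or_iff_not_imp_left.2 fun hne => ?_
    obtain ⟨a, b, hab, heq, -⟩ := hpair M hM hne
    exact ⟨a, b, hab, heq⟩

/-- A block other than `{p, q}` lies entirely inside or entirely outside the arc `{p, q}`. -/
lemma IsTLPattern.even_card_inter (hσ : IsTLPattern Z σ) (hpq : p < q) (hmem : {p, q} ∈ σ)
    (hM : M ∈ σ) (hne : M ≠ {p, q}) :
    Even ((Z.filter (fun z => p ≤ z ∧ z < q)) ∩ M).card := by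
  obtain ⟨d, -, hd, hblocks⟩ := hσ.exists_unpaired
  have hcross := hσ.1.pairwiseNoncrossing_iff.1 hσ.2.1
  have not_mem {z : ℕ} (hz : z ∈ M) : z ≠ p ∧ z ≠ q := by
    constructor <;> rintro rfl <;> exact hne (hσ.1.eq_of_mem hM hmem hz (by simp))
  have inside_iff {u v : ℕ} (hu : u ∈ M) (hv : v ∈ M) (hin : p < u ∧ u < q) : p < v ∧ v < q := by
    have hv' := not_mem hv
    refine ⟨lt_of_not_ge fun hvp => hne ?_, lt_of_not_ge fun hqv => hne ?_⟩
    · exact hcross M hM _ hmem v hv p (by simp) u hu q (by simp) (by omega) hin.1 hin.2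
    · exact (hcross _ hmem M hM p (by simp) u hu q (by simp) v hv hin.1 hin.2 (by omega)).symm
  by_cases hin : ∃ u ∈ M, p < u ∧ u < q
  · obtain ⟨u, hu, hin⟩ := hin
    have hsub : M ⊆ Z.filter (fun z => p ≤ z ∧ z < q) := fun v hv => by
      have := inside_iff hu hv hin
      exact Finset.mem_filter.2 ⟨hσ.1.2.1 M hM hv, this.1.le, this.2⟩
    rw [Finset.inter_eq_right.2 hsub]
    rcases hblocks M hM with rfl | ⟨a, b, hab, rfl⟩
    · obtain rfl := Finset.mem_singleton.1 hu
      exact absurd (hd p q hpq hmem) (by omega)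
    · simp [Finset.card_pair hab.ne]
  · have hempty : Z.filter (fun z => p ≤ z ∧ z < q) ∩ M = ∅ := by
      refine Finset.eq_empty_of_forall_notMem fun u hu => hin ?_
      obtain ⟨hu, huM⟩ := Finset.mem_inter.1 hu
      have := not_mem huM
      exact ⟨u, huM, by grind⟩
    simp [hempty]

lemma IsTLPattern.odd_card_filter (hσ : IsTLPattern Z σ) (hpq : p < q) (hmem : {p, q} ∈ σ) :
    Odd (Z.filter (fun z => p ≤ z ∧ z < q)).card := by
  have hself : Z.filter (fun z => p ≤ z ∧ z < q) ∩ {p, q} = {p} := by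
    have hp : p ∈ Z := hσ.1.2.1 _ hmem (by simp)
    ext z
    grind
  rw [← hσ.1.sum_card_inter (Finset.filter_subset _ Z), ← Finset.add_sum_erase σ _ hmem, hself,
    Finset.card_singleton]
  refine odd_one.add_even (Finset.even_sum _ fun M hM => ?_)
  exact hσ.even_card_inter hpq hmem (Finset.mem_of_mem_erase hM) (Finset.ne_of_mem_erase hM)

lemma even_card_filter_tlPoints (hi : i ≠ 0) (j : ℕ) :
    Even ((tlPoints E).filter (fun z => 2 * i ≤ z ∧ z < 2 * j)).card := by
  have hpairs : (tlPoints E).filter (fun z => 2 * i ≤ z ∧ z < 2 * j) =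
      (E.filter (fun m => i ≤ m ∧ m < j)).biUnion (fun m => {2 * m, 2 * m + 1}) := by
    ext z
    simp only [Finset.mem_filter, mem_tlPoints_iff, Finset.mem_biUnion, Finset.mem_insert,
      Finset.mem_singleton]
    constructor
    · rintro ⟨h | h, hz⟩
      · omega
      · exact ⟨z / 2, ⟨h, by omega⟩, by omega⟩
    · rintro ⟨m, ⟨hm, him⟩, hz⟩
      exact ⟨.inr (by rwa [show z / 2 = m by omega]), by omega⟩
  rw [hpairs, Finset.card_biUnion]
  · exact Finset.even_sum _ fun m _ => by simp
  · intro m _ m' _ hmm'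
    simp only [Finset.disjoint_left, Finset.mem_insert, Finset.mem_singleton]
    omega

lemma IsTLPattern.pair_even_notMem (h0 : 0 ∉ E) (hσ : IsTLPattern (tlPoints E) σ) (hij : i < j) :
    {2 * i, 2 * j} ∉ σ := fun hmem => by
  have hi : i ∈ E := by
    have := mem_tlPoints_iff.1 (hσ.1.2.1 _ hmem (Finset.mem_insert_self _ _))
    simpa [show 2 * i ≠ 1 by omega] using this
  exact Nat.not_even_iff_odd.2 (hσ.odd_card_filter (by omega) hmem)
    (even_card_filter_tlPoints (by rintro rfl; exact h0 hi) j)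

/-- Two indices are related when no block of `σ` separates them, index `i` being placed just
before the point `2i`. -/
def arcSetoid (σ : Finset (Finset ℕ)) : Setoid ℕ where
  r i j := (i = 0 ↔ j = 0) ∧ ∀ M ∈ σ, ∀ a ∈ M, ∀ b ∈ M,
    (a < 2 * i ∧ 2 * i ≤ b) ↔ (a < 2 * j ∧ 2 * j ≤ b)
  iseqv := ⟨fun _ => ⟨Iff.rfl, fun _ _ _ _ _ _ => Iff.rfl⟩,
    fun h => ⟨h.1.symm, fun M hM a ha b hb => (h.2 M hM a ha b hb).symm⟩,
    fun h h' => ⟨h.1.trans h'.1,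
      fun M hM a ha b hb => (h.2 M hM a ha b hb).trans (h'.2 M hM a ha b hb)⟩⟩

lemma isNoncrossing_arcSetoid (σ : Finset (Finset ℕ)) : IsNoncrossing (arcSetoid σ) := by
  intro i j k l hij hjk hkl hik hjl
  have := hik.1
  refine ⟨by omega, fun M hM a ha b hb => ?_⟩
  have := hik.2 M hM a ha b hb
  have := hjl.2 M hM a ha b hb
  omega

lemma IsPartitionOf.gapSetoid_le_arcSetoid (hσ : IsPartitionOf (tlPoints E) σ) :
    gapSetoid E ≤ arcSetoid σ := by
  refine gapSetoid_le_iff.2 fun i hi => ?_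
  obtain ⟨hi0, hiE⟩ : i ≠ 0 ∧ i ∉ E := by simpa using hi
  refine ⟨by omega, fun M hM a ha b hb => ?_⟩
  have lt_iff {z : ℕ} (hz : z ∈ M) : z < 2 * i ↔ z < 2 * (i + 1) := by
    have hne : z / 2 ≠ i := by
      rintro rfl
      exact (mem_tlPoints_iff.1 (hσ.2.1 M hM hz)).elim (by omega) hiE
    omega
  have := lt_iff ha
  have := lt_iff hb
  omega

lemma IsTLPattern.isArcPresentation (h0 : 0 ∉ E) (hσ : IsTLPattern (tlPoints E) σ) :
    IsArcPresentation E σ (arcSetoid σ) where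
  gap_le := hσ.1.gapSetoid_le_arcSetoid
  eq_zero j hj := hj.1.1 rfl
  rel_of_arc c hc d _ hcd hM := by
    have hc0 : c ≠ 0 := by rintro rfl; exact h0 hc
    refine ⟨by omega, fun M' hM' a ha b hb => ?_⟩
    rcases eq_or_ne M' {2 * c, 2 * d + 1} with rfl | hne
    · simp only [Finset.mem_insert, Finset.mem_singleton] at ha hb
      omega
    have not_mem {z : ℕ} (hz : z ∈ M') : z ≠ 2 * c ∧ z ≠ 2 * d + 1 := by
      constructor <;> rintro rfl <;> exact hne (hσ.1.eq_of_mem hM' hM hz (by simp))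
    have hcross := hσ.1.pairwiseNoncrossing_iff.1 hσ.2.1
    have h₁ : ¬ (a < 2 * c ∧ 2 * c < b ∧ b < 2 * d + 1) := fun g =>
      hne (hcross M' hM' _ hM a ha (2 * c) (by simp) b hb (2 * d + 1) (by simp) g.1 g.2.1 g.2.2)
    have h₂ : ¬ (2 * c < a ∧ a < 2 * d + 1 ∧ 2 * d + 1 < b) := fun g => hne
      (hcross _ hM M' hM' (2 * c) (by simp) a ha (2 * d + 1) (by simp) b hb g.1 g.2.1 g.2.2).symm
    have := not_mem ha
    have := not_mem hb
    omega
  exists_arc i hi j hij hR := by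
    obtain ⟨e, he, -, hblocks⟩ := hσ.exists_unpaired
    obtain ⟨M, ⟨hM, hiM⟩, -⟩ := hσ.1.2.2 (2 * i) (mem_tlPoints_iff.2 (by simp [hi]))
    rcases hblocks M hM with rfl | ⟨a, b, hab, rfl⟩
    · obtain rfl := Finset.mem_singleton.1 hiM
      exact absurd he (by simp)
    have hsep := hR.2 _ hM a (by simp) b (by simp)
    simp only [Finset.mem_insert, Finset.mem_singleton] at hiM
    obtain rfl : a = 2 * i := by omega
    have hbE : b / 2 ∈ E := (mem_tlPoints_iff.1 (hσ.1.2.1 _ hM (by simp))).resolve_left (by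
      rintro rfl
      exact h0 ((show i = 0 by omega) ▸ hi))
    have hodd : b = 2 * (b / 2) + 1 := by
      by_contra hb
      refine hσ.pair_even_notMem h0 (i := i) (j := b / 2) (by omega) ?_
      rwa [show 2 * (b / 2) = b by omega]
    exact ⟨b / 2, hbE, by omega, by omega, hodd ▸ hM⟩

end ArcsToRelation

section RelationToArcs

variable {ℓ : ℕ} {E : Finset ℕ} {R : Setoid ℕ} {φ : ℕ → ℕ} {c c' d m z : ℕ}

/-- The block joining the point just after `c` to the one just before `φ c`; it has the former
point only if `c ∈ E`. For `φ` the cyclic successor along a relation these blocks form a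
Temperley–Lieb pattern. -/
def arcBlock (E : Finset ℕ) (φ : ℕ → ℕ) (c : ℕ) : Finset ℕ :=
  if c ∈ E then {2 * c, 2 * φ c - 1} else {2 * φ c - 1}

/-- The Temperley–Lieb pattern of a cyclic successor function `φ`; the unpaired point is the block
of `ℓ + 1`. -/
def arcPattern (ℓ : ℕ) (E : Finset ℕ) (φ : ℕ → ℕ) : Finset (Finset ℕ) :=
  (insert (ℓ + 1) E).image (arcBlock E φ)

lemma mem_arcBlock_iff : z ∈ arcBlock E φ c ↔ z = 2 * φ c - 1 ∨ c ∈ E ∧ z = 2 * c := by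
  unfold arcBlock
  split_ifs with hc <;> simp [hc, or_comm]

lemma IsCyclicNext.eq_one_or_pred_mem (hgap : gapSetoid E ≤ R)
    (hc : c ∈ insert (ℓ + 1) E) (h : IsCyclicNext R (Finset.Icc 1 (ℓ + 1)) c d) :
    d = 1 ∨ d - 1 ∈ E := by
  obtain ⟨hd, hcd, hnext⟩ := h
  rw [Finset.mem_Icc] at hd
  by_contra! hne
  have hpred : R (d - 1) d := by
    simpa [show d - 1 + 1 = d by omega] using gapSetoid_le_iff.1 hgap (d - 1) (by grind)
  have hcpred : R c (d - 1) := R.trans hcd (R.symm hpred)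
  have hmem : d - 1 ∈ Finset.Icc 1 (ℓ + 1) := by grind
  rcases hnext with ⟨hlt, hgap'⟩ | ⟨-, hbd⟩
  · have hcd' : c ≠ d - 1 := by
      rintro rfl
      exact (Finset.mem_insert.1 hc).elim (by omega) hne.2
    exact hgap' (d - 1) hmem (by omega) (by omega) hcpred
  · exact absurd (hbd (d - 1) hmem hcpred).1 (by omega)

lemma exists_cyclicNext_eq_succ (hE : E ⊆ Finset.Icc 1 ℓ) (hgap : gapSetoid E ≤ R)
    (hφ : ∀ c ∈ Finset.Icc 1 (ℓ + 1), IsCyclicNext R (Finset.Icc 1 (ℓ + 1)) c (φ c))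
    (hm : m ∈ insert 0 E) : ∃ c ∈ insert (ℓ + 1) E, φ c = m + 1 := by
  obtain ⟨c, hc, hcm⟩ := surjOn_of_isCyclicNext hφ
    (show m + 1 ∈ (Finset.Icc 1 (ℓ + 1) : Finset ℕ) by grind)
  refine ⟨c, by_contra fun hcE => ?_, hcm⟩
  obtain ⟨-, -, hnext⟩ := hφ c hc
  rw [hcm] at hnext
  have hsucc : R c (c + 1) := gapSetoid_le_iff.1 hgap c (by grind)
  have hmem : c + 1 ∈ Finset.Icc 1 (ℓ + 1) := by grind
  rcases hnext with ⟨hlt, hgap'⟩ | ⟨-, hbd⟩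
  · have hcm' : c ≠ m := by rintro rfl; grind
    exact hgap' (c + 1) hmem (by omega) (by omega) hsucc
  · exact absurd (hbd (c + 1) hmem hsucc).2 (by omega)

lemma eq_of_mem_arcBlock (hE : E ⊆ Finset.Icc 1 ℓ)
    (hφ : ∀ c ∈ Finset.Icc 1 (ℓ + 1), IsCyclicNext R (Finset.Icc 1 (ℓ + 1)) c (φ c))
    (hc : c ∈ insert (ℓ + 1) E) (hc' : c' ∈ insert (ℓ + 1) E)
    (hz : z ∈ arcBlock E φ c) (hz' : z ∈ arcBlock E φ c') : c = c' := by
  have hcI : c ∈ Finset.Icc 1 (ℓ + 1) := by grind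
  have hcI' : c' ∈ Finset.Icc 1 (ℓ + 1) := by grind
  have hpos := (Finset.mem_Icc.1 (hφ c hcI).1).1
  have hpos' := (Finset.mem_Icc.1 (hφ c' hcI').1).1
  rcases mem_arcBlock_iff.1 hz with hz | ⟨-, hz⟩ <;>
    rcases mem_arcBlock_iff.1 hz' with hz' | ⟨-, hz'⟩
  · have heq : φ c = φ c' := by omega
    exact (hφ c hcI).eq_of_eq hcI hcI' (heq ▸ hφ c' hcI')
  all_goals omega

lemma isPartitionOf_arcPattern (hE : E ⊆ Finset.Icc 1 ℓ) (hgap : gapSetoid E ≤ R)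
    (hφ : ∀ c ∈ Finset.Icc 1 (ℓ + 1), IsCyclicNext R (Finset.Icc 1 (ℓ + 1)) c (φ c)) :
    IsPartitionOf (tlPoints E) (arcPattern ℓ E φ) := by
  unfold IsPartitionOf arcPattern
  simp only [Finset.forall_mem_image]
  refine ⟨fun c _ => ⟨_, mem_arcBlock_iff.2 (.inl rfl)⟩, fun c hc z hz => ?_, fun z hz => ?_⟩
  · rw [mem_tlPoints_iff]
    have hcI : c ∈ Finset.Icc 1 (ℓ + 1) := by grind
    have hpos := (Finset.mem_Icc.1 (hφ c hcI).1).1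
    rcases mem_arcBlock_iff.1 hz with rfl | ⟨hcE, rfl⟩
    · refine ((hφ c hcI).eq_one_or_pred_mem hgap hc).imp (by omega) fun h => ?_
      rwa [show (2 * φ c - 1) / 2 = φ c - 1 by omega]
    · exact .inr (by simpa using hcE)
  · obtain ⟨c, hc, hzc⟩ : ∃ c ∈ insert (ℓ + 1) E, z ∈ arcBlock E φ c := by
      rcases Nat.even_or_odd' z with ⟨m, rfl | rfl⟩
      · have hm : m ∈ E := by simpa using (mem_tlPoints_iff.1 hz).resolve_left (by omega)
        exact ⟨m, by simp [hm], mem_arcBlock_iff.2 (.inr ⟨hm, rfl⟩)⟩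
      · have hm : m ∈ insert 0 E := by grind [mem_tlPoints_iff]
        obtain ⟨c, hc, hcm⟩ := exists_cyclicNext_eq_succ hE hgap hφ hm
        exact ⟨c, hc, mem_arcBlock_iff.2 (.inl (by omega))⟩
    refine ⟨_, ⟨Finset.mem_image_of_mem _ hc, hzc⟩, ?_⟩
    rintro _ ⟨hL, hzL⟩
    obtain ⟨c', hc', rfl⟩ := Finset.mem_image.1 hL
    rw [eq_of_mem_arcBlock hE hφ hc hc' hzc hzL]

/-- The two points of a block lie on the same side of every other arc, because its indices `c'`
and `φ c'` are related and no class crosses an arc. -/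
lemma between_iff_isUnderArc (hE : E ⊆ Finset.Icc 1 ℓ) (hR : IsNoncrossing R)
    (hφ : ∀ c ∈ Finset.Icc 1 (ℓ + 1), IsCyclicNext R (Finset.Icc 1 (ℓ + 1)) c (φ c))
    (hc : c ∈ insert (ℓ + 1) E) (hc' : c' ∈ insert (ℓ + 1) E) (hne : c ≠ c')
    (hz : z ∈ arcBlock E φ c') :
    (2 * c < z ∧ z < 2 * φ c - 1) ∨ (2 * φ c - 1 < z ∧ z < 2 * c) ↔
      IsUnderArc c (φ c) c' := by
  have hcI : c ∈ Finset.Icc 1 (ℓ + 1) := by grind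
  have hcI' : c' ∈ Finset.Icc 1 (ℓ + 1) := by grind
  have hpos := (Finset.mem_Icc.1 (hφ c hcI).1).1
  obtain ⟨hφI', hrel, -⟩ := hφ c' hcI'
  have hpos' := (Finset.mem_Icc.1 hφI').1
  rcases mem_arcBlock_iff.1 hz with rfl | ⟨-, rfl⟩
  · have hφne : φ c ≠ φ c' := fun heq =>
      hne ((hφ c hcI).eq_of_eq hcI hcI' (heq ▸ hφ c' hcI'))
    rw [(hφ c hcI).isUnderArc_iff_of_rel hR hcI' hφI' hrel, IsUnderArc]
    omega
  · rw [IsUnderArc]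
    omega

lemma pairwiseNoncrossing_arcPattern (hE : E ⊆ Finset.Icc 1 ℓ) (hgap : gapSetoid E ≤ R)
    (hR : IsNoncrossing R)
    (hφ : ∀ c ∈ Finset.Icc 1 (ℓ + 1), IsCyclicNext R (Finset.Icc 1 (ℓ + 1)) c (φ c)) :
    PairwiseNoncrossing (arcPattern ℓ E φ) := by
  rw [(isPartitionOf_arcPattern hE hgap hφ).pairwiseNoncrossing_iff]
  unfold arcPattern
  simp only [Finset.forall_mem_image]
  intro p hp q hq a ha b hb c hc d hd hab hbc hcd
  by_contra hne
  have hpq : p ≠ q := by rintro rfl; exact hne rfl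
  have hbd := (between_iff_isUnderArc hE hR hφ hp hq hpq hb).trans
    (between_iff_isUnderArc hE hR hφ hp hq hpq hd).symm
  rw [mem_arcBlock_iff] at ha hc
  omega

lemma isTLPattern_arcPattern (hE : E ⊆ Finset.Icc 1 ℓ) (hgap : gapSetoid E ≤ R)
    (hR : IsNoncrossing R)
    (hφ : ∀ c ∈ Finset.Icc 1 (ℓ + 1), IsCyclicNext R (Finset.Icc 1 (ℓ + 1)) c (φ c)) :
    IsTLPattern (tlPoints E) (arcPattern ℓ E φ) := by
  have hlast : ℓ + 1 ∉ E := fun h => by simpa using hE h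
  have htop : ℓ + 1 ∈ insert (ℓ + 1) E := Finset.mem_insert_self _ _
  have le_top {c : ℕ} (hc : c ∈ Finset.Icc 1 (ℓ + 1)) : 1 ≤ φ c ∧ φ c ≤ ℓ + 1 :=
    Finset.mem_Icc.1 (hφ c hc).1
  have htop_pos := le_top (c := ℓ + 1) (by simp)
  refine ⟨isPartitionOf_arcPattern hE hgap hφ, pairwiseNoncrossing_arcPattern hE hgap hR hφ,
    _, Finset.mem_image_of_mem _ htop, 2 * φ (ℓ + 1) - 1, ⟨φ (ℓ + 1) - 1, by omega⟩,
    if_neg hlast, ?_⟩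
  unfold arcPattern
  simp only [Finset.forall_mem_image]
  intro c hc hne
  have hcE : c ∈ E := (Finset.mem_insert.1 hc).resolve_left (by rintro rfl; exact hne rfl)
  have hcI := Finset.mem_Icc.1 (hE hcE)
  have hφc := le_top (c := c) (by grind)
  have hout := between_iff_isUnderArc hE hR hφ hc htop (by omega)
    (mem_arcBlock_iff.2 (.inl rfl))
  have hφne : 2 * φ (ℓ + 1) - 1 ≠ 2 * φ c - 1 := fun heq => by
    have := eq_of_mem_arcBlock hE hφ hc htop (mem_arcBlock_iff.2 (.inl rfl))
      (mem_arcBlock_iff.2 (.inl heq.symm))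
    omega
  rw [IsUnderArc] at hout
  have hblock : arcBlock E φ c = {2 * c, 2 * φ c - 1} := if_pos hcE
  rcases lt_or_ge c (φ c) with hlt | hle
  · exact ⟨2 * c, 2 * φ c - 1, by omega, hblock, by omega⟩
  · exact ⟨2 * φ c - 1, 2 * c, by omega, by rw [hblock, Finset.pair_comm], by omega⟩

lemma isArcPresentation_arcPattern (hE : E ⊆ Finset.Icc 1 ℓ) (hgap : gapSetoid E ≤ R)
    (h0 : ∀ j, R 0 j → j = 0)
    (hφ : ∀ c ∈ Finset.Icc 1 (ℓ + 1), IsCyclicNext R (Finset.Icc 1 (ℓ + 1)) c (φ c)) :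
    IsArcPresentation E (arcPattern ℓ E φ) R where
  gap_le := hgap
  eq_zero := h0
  rel_of_arc c hc d _ hcd hσ := by
    obtain ⟨c', hc', heq⟩ := Finset.mem_image.1 hσ
    have hcI' : c' ∈ Finset.Icc 1 (ℓ + 1) := by grind
    obtain ⟨hφI, hrel, -⟩ := hφ c' hcI'
    have hpos := (Finset.mem_Icc.1 hφI).1
    have hc_mem : 2 * c ∈ arcBlock E φ c' := heq ▸ by simp
    have hd_mem : 2 * d + 1 ∈ arcBlock E φ c' := heq ▸ by simp
    rw [mem_arcBlock_iff] at hc_mem hd_mem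
    obtain rfl : c' = c := by omega
    rwa [show d + 1 = φ c' by omega]
  exists_arc i hi j hij hij' := by
    have hiI := Finset.mem_Icc.1 (hE hi)
    have hiI' : i ∈ Finset.Icc 1 (ℓ + 1) := by grind
    obtain ⟨k, hkI, hik, hkj, hRk⟩ : ∃ k ∈ Finset.Icc 1 (ℓ + 1), i < k ∧ k ≤ j ∧ R i k := by
      rcases le_or_gt j ℓ with hjℓ | hjℓ
      · exact ⟨j, by grind, hij, le_rfl, hij'⟩
      · have hjgap : gapSetoid E j (ℓ + 1) := fun e he => by grind
        exact ⟨ℓ + 1, by simp, by omega, hjℓ, R.trans hij' (hgap hjgap)⟩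
    have hpred := (hφ i hiI').eq_one_or_pred_mem hgap (by simp [hi])
    obtain ⟨hlt, hnext⟩ := (hφ i hiI').2.2.resolve_right
      fun h => absurd (h.2 k hkI hRk).2 (by omega)
    have hφk : φ i ≤ k := le_of_not_gt fun h => hnext k hkI hik h hRk
    refine ⟨φ i - 1, hpred.resolve_left (by omega), by omega, by omega, ?_⟩
    refine Finset.mem_image.2 ⟨i, by simp [hi], ?_⟩
    rw [arcBlock, if_pos hi, show 2 * (φ i - 1) + 1 = 2 * φ i - 1 by omega]

lemma exists_isTLPattern_isArcPresentation (hE : E ⊆ Finset.Icc 1 ℓ) (hgap : gapSetoid E ≤ R)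
    (hR : IsNoncrossing R) (h0 : ∀ j, R 0 j → j = 0) :
    ∃ σ, IsTLPattern (tlPoints E) σ ∧ IsArcPresentation E σ R := by
  choose! φ hφ using fun c (hc : c ∈ Finset.Icc 1 (ℓ + 1)) => exists_isCyclicNext R hc
  exact ⟨arcPattern ℓ E φ, isTLPattern_arcPattern hE hgap hR hφ,
    isArcPresentation_arcPattern hE hgap h0 hφ⟩

end RelationToArcs

section Correspondence

variable {ℓ : ℕ} {x r : ℕ → ℕ} {P σ : Finset (Finset ℕ)}

lemma map_ncpSubgroup_eq_closure_tlGens (hP : IsPartitionOf (Blam ℓ x) P)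
    (h : IsArcPresentation (evenIndices ℓ r) σ
      (blockSetoid ℓ x P ⊔ gapSetoid (evenIndices ℓ r))) :
    AddSubgroup.map (QuotientAddGroup.mk' (Ksub ℓ r)) (ncpSubgroup ℓ x P) =
      AddSubgroup.closure
        (QuotientAddGroup.mk' (Ksub ℓ r) '' tlGens ℓ (evenIndices ℓ r) σ) := by
  rw [← AddMonoidHom.map_closure, AddSubgroup.map_eq_map_iff, QuotientAddGroup.ker_mk']
  exact eq_of_forall_ge_iff fun W =>
    (ncpSubgroup_sup_Ksub_le_iff hP).trans h.closure_tlGens_sup_Ksub_le_iff.symm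

lemma exists_isTLPattern_map_ncpSubgroup_eq
    (hx : ∀ i ∈ Finset.Icc 1 ℓ, ∀ j ∈ Finset.Icc 1 ℓ, i < j → x j < x i)
    (hxpos : ∀ i ∈ Finset.Icc 1 ℓ, 0 < x i) (r : ℕ → ℕ) (hP : IsNCP (Blam ℓ x) P) :
    ∃ σ, IsTLPattern (tlPoints (evenIndices ℓ r)) σ ∧
      AddSubgroup.map (QuotientAddGroup.mk' (Ksub ℓ r)) (ncpSubgroup ℓ x P) =
        AddSubgroup.closure
          (QuotientAddGroup.mk' (Ksub ℓ r) '' tlGens ℓ (evenIndices ℓ r) σ) := by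
  have hR : IsNoncrossing (blockSetoid ℓ x P ⊔ gapSetoid (evenIndices ℓ r)) :=
    (hP.isNoncrossing_blockSetoid hx hxpos).sup (hasConvexClasses_gapSetoid _)
  have h0 (j : ℕ) (hj : (blockSetoid ℓ x P ⊔ gapSetoid (evenIndices ℓ r)) 0 j) : j = 0 := by
    refine mem_of_sup_rel (s := {0}) ?_ ?_ hj rfl
    · rintro _ rfl b hb
      exact hb.1.1 rfl
    · rintro _ rfl b hb
      exact Nat.le_zero.1 ((hb 0 (Finset.mem_insert_self _ _)).1 le_rfl)
  obtain ⟨σ, hσ, harc⟩ :=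
    exists_isTLPattern_isArcPresentation (evenIndices_subset ℓ r) le_sup_right hR h0
  exact ⟨σ, hσ, map_ncpSubgroup_eq_closure_tlGens hP.1 harc⟩

lemma exists_isEvenNCP_map_ncpSubgroup_eq
    (hx : ∀ i ∈ Finset.Icc 1 ℓ, ∀ j ∈ Finset.Icc 1 ℓ, i < j → x j < x i)
    (hxpos : ∀ i ∈ Finset.Icc 1 ℓ, 0 < x i)
    (hσ : IsTLPattern (tlPoints (evenIndices ℓ r)) σ) :
    ∃ P, IsEvenNCP ℓ x r P ∧
      AddSubgroup.map (QuotientAddGroup.mk' (Ksub ℓ r)) (ncpSubgroup ℓ x P) =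
        AddSubgroup.closure
          (QuotientAddGroup.mk' (Ksub ℓ r) '' tlGens ℓ (evenIndices ℓ r) σ) := by
  have hE := evenIndices_subset ℓ r
  have harc : IsArcPresentation (evenIndices ℓ r) σ (arcSetoid σ) :=
    hσ.isArcPresentation fun h => by simpa using hE h
  have hP : IsEvenNCP ℓ x r (ncpOf ℓ x (arcSetoid σ)) :=
    isEvenNCP_ncpOf hx hxpos harc.gap_le (isNoncrossing_arcSetoid σ)
  refine ⟨_, hP, map_ncpSubgroup_eq_closure_tlGens hP.1.1 ?_⟩
  rwa [blockSetoid_ncpOf hx hxpos hE harc.gap_le harc.eq_zero, sup_eq_left.2 harc.gap_le]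

end Correspondence

/-- Theorem 4.4 (combinatorial form): the images in `A/K` of the subgroups `A_𝓛`, `𝓛`
ranging over even NCPs of `B_λ`, are exactly the Lusztig subgroups `H_σ`, `σ` ranging
over the Temperley–Lieb patterns of `Z`. -/
theorem stmt4 (ℓ : ℕ) (x r : ℕ → ℕ)
    (hx : ∀ i ∈ Finset.Icc 1 ℓ, ∀ j ∈ Finset.Icc 1 ℓ, i < j → x j < x i)
    (hxpos : ∀ i ∈ Finset.Icc 1 ℓ, 0 < x i)
    (hr : ∀ i ∈ Finset.Icc 1 ℓ, 0 < r i)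
    (E : Finset ℕ)
    (hE : E = (Finset.Icc 1 ℓ).filter (fun m => Even (∑ j ∈ Finset.Icc 1 m, r j)))
    (Z : Finset ℕ)
    (hZ : Z = insert 1 (E.biUnion (fun m => ({2 * m, 2 * m + 1} : Finset ℕ)))) :
    {S : AddSubgroup ((Fin ℓ → ZMod 2) ⧸ Ksub ℓ r) |
        ∃ P, IsEvenNCP ℓ x r P ∧
          S = AddSubgroup.map (QuotientAddGroup.mk' (Ksub ℓ r)) (ncpSubgroup ℓ x P)} =
    {S | ∃ σ, IsTLPattern Z σ ∧
          S = AddSubgroup.closure (QuotientAddGroup.mk' (Ksub ℓ r) '' tlGens ℓ E σ)} := by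
  obtain rfl : E = evenIndices ℓ r := hE
  obtain rfl : Z = tlPoints (evenIndices ℓ r) := hZ
  ext S
  constructor
  · rintro ⟨P, hP, rfl⟩
    exact exists_isTLPattern_map_ncpSubgroup_eq hx hxpos r hP.1
  · rintro ⟨σ, hσ, rfl⟩
    obtain ⟨P, hP, heq⟩ := exists_isEvenNCP_map_ncpSubgroup_eq hx hxpos hσ
    exact ⟨P, hP, heq.symm⟩
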